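/- Let R be a commutative ring, S a multiplicatively closed subset of R, and M a finitely generated faithful multiplication R-module. For an ideal I of R, the submodule N = IM is S-quasi-copure in M if and only if I is an S-quasi-copure ideal of R. -/

import Mathlib

/-!
An isomorphism between the submodule lattices of two modules that commutes with multiplication by
ideals preserves every notion expressible through inclusions and ideal multiplication; testing
elements by the cyclic submodules they generate shows that being `S`-prime, `S`-copure and hence
`S`-quasi-copure are such notions. For a finitely generated faithful multiplication module `M`,
`K ↦ K M` is such an isomorphism from the ideals of `R` to the submodules of `M`. It is surjective
since `M` is a multiplication module. It reflects inclusions because the ideals `(R m :_R M)`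
generate the unit ideal, while every `a` in one of them satisfies `a² r ∈ K` whenever `r M ⊆ K M`.
-/

variable {R : Type*} [CommRing R]

/-- `(0 :_M I)` : the elements of `M` annihilated by the ideal `I`. -/
def ann0 (R : Type*) [CommRing R] (M : Type*) [AddCommGroup M] [Module R M]
    (I : Ideal R) : Submodule R M :=
  Submodule.torsionBySet R M (I : Set R)

/-- `N` is an S-small submodule: `sM ≤ N + L` implies `tM ≤ L` for some `t ∈ S`. -/
def SSmall (S : Set R) {M : Type*} [AddCommGroup M] [Module R M] (N : Submodule R M) : Prop :=
  ∀ (L : Submodule R M), ∀ s ∈ S, (∀ m : M, s • m ∈ N ⊔ L) → ∃ t ∈ S, ∀ m : M, t • m ∈ L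

/-- `N` is an S-essential submodule: `N ⊓ L = 0` implies `sL = 0` for some `s ∈ S`. -/
def SEssential (S : Set R) {M : Type*} [AddCommGroup M] [Module R M] (N : Submodule R M) : Prop :=
  ∀ L : Submodule R M, N ⊓ L = ⊥ → ∃ s ∈ S, ∀ x ∈ L, s • x = (0 : M)

/-- `M` is an S-comultiplication module. -/
def SComult (S : Set R) (M : Type*) [AddCommGroup M] [Module R M] : Prop :=
  ∀ N : Submodule R M, ∃ s ∈ S, ∃ I : Ideal R,
    (∀ x ∈ ann0 R M I, s • x ∈ N) ∧ N ≤ ann0 R M I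

/-- `M` satisfies the S-double annihilator condition. -/
def SDAC (S : Set R) (M : Type*) [AddCommGroup M] [Module R M] : Prop :=
  ∀ I : Ideal R, ∃ s ∈ S, ∀ r ∈ (ann0 R M I).annihilator, s * r ∈ I

/-- `L` is an S-copure submodule: `s(L :_M I) ⊆ L + (0 :_M I)` for all ideals `I`. -/
def SCopure (S : Set R) {M : Type*} [AddCommGroup M] [Module R M] (L : Submodule R M) : Prop :=
  ∃ s ∈ S, ∀ (I : Ideal R) (m : M), (∀ a ∈ I, a • m ∈ L) → s • m ∈ L ⊔ ann0 R M I

/-- `P` is a prime submodule of `M`. -/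
def IsPrimeSubmodule {M : Type*} [AddCommGroup M] [Module R M] (P : Submodule R M) : Prop :=
  P ≠ ⊤ ∧ ∀ (a : R) (m : M), a • m ∈ P → a ∈ P.colon ⊤ ∨ m ∈ P

/-- `P` is an S-prime submodule of `M`. -/
def SPrime (S : Set R) {M : Type*} [AddCommGroup M] [Module R M] (P : Submodule R M) : Prop :=
  ((P.colon ⊤ : Set R) ∩ S = ∅) ∧
    ∃ s ∈ S, ∀ (a : R) (m : M), a • m ∈ P → s * a ∈ P.colon ⊤ ∨ s • m ∈ P

/-- `N` is an S-quasi-copure submodule: every S-prime submodule containing `N` is S-copure. -/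
def SQuasiCopure (S : Set R) {M : Type*} [AddCommGroup M] [Module R M] (N : Submodule R M) : Prop :=
  ∀ P : Submodule R M, SPrime S P → N ≤ P → SCopure S P

/-- `N` is a weak S-copure submodule: every prime submodule containing `N` is S-copure. -/
def WeakSCopure (S : Set R) {M : Type*} [AddCommGroup M] [Module R M] (N : Submodule R M) : Prop :=
  ∀ P : Submodule R M, IsPrimeSubmodule P → N ≤ P → SCopure S P

variable {M : Type*} [AddCommGroup M] [Module R M]

open scoped Pointwise

section LatticeCharacterizations

theorem mem_colon_top_iff_smul_top_le {P : Submodule R M} {r : R} :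
    r ∈ P.colon ⊤ ↔ r • (⊤ : Submodule R M) ≤ P :=
  Submodule.mem_colon_iff_le (N' := ⊤)

theorem le_ann0_iff_smul_eq_bot {I : Ideal R} {L : Submodule R M} :
    L ≤ ann0 R M I ↔ I • L = ⊥ := by
  rw [← le_bot_iff, Submodule.smul_le]
  simp only [SetLike.le_def, ann0, Submodule.mem_torsionBySet_iff, Submodule.mem_bot,
    Subtype.forall, SetLike.mem_coe]
  exact ⟨fun h a ha m hm ↦ h hm a ha, fun h m hm a ha ↦ h a ha m hm⟩

theorem pointwise_smul_span_singleton_le_iff {a : R} {m : M} {P : Submodule R M} :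
    a • Submodule.span R {m} ≤ P ↔ a • m ∈ P := by
  rw [Submodule.smul_span, Set.smul_set_singleton, Submodule.span_singleton_le_iff_mem]

theorem smul_span_singleton_le_iff {I : Ideal R} {m : M} {P : Submodule R M} :
    I • Submodule.span R {m} ≤ P ↔ ∀ a ∈ I, a • m ∈ P := by
  simp only [SetLike.le_def, Submodule.mem_smul_span_singleton, forall_exists_index, and_imp]
  exact ⟨fun h a ha ↦ h a ha rfl, fun h _ a ha hax ↦ hax ▸ h a ha⟩

theorem sPrime_iff_forall_submodule {S : Set R} {P : Submodule R M} :
    SPrime S P ↔ (P.colon ⊤ : Set R) ∩ S = ∅ ∧ ∃ s ∈ S, ∀ (a : R) (L : Submodule R M),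
      a • L ≤ P → s * a ∈ P.colon ⊤ ∨ s • L ≤ P := by
  refine and_congr_right fun _ ↦ exists_congr fun s ↦ and_congr_right fun _ ↦
    forall_congr' fun a ↦ ⟨fun h L haL ↦ or_iff_not_imp_left.2 fun hsa ↦ ?_, fun h m ham ↦ ?_⟩
  · rintro _ ⟨m, hm, rfl⟩
    exact (h m (haL (Submodule.smul_mem_pointwise_smul m a L hm))).resolve_left hsa
  · simpa only [pointwise_smul_span_singleton_le_iff] using
      h (Submodule.span R {m}) (pointwise_smul_span_singleton_le_iff.2 ham)

theorem sCopure_iff_forall_submodule {S : Set R} {L : Submodule R M} :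
    SCopure S L ↔ ∃ s ∈ S, ∀ (I : Ideal R) (N : Submodule R M),
      I • N ≤ L → s • N ≤ L ⊔ ann0 R M I := by
  refine exists_congr fun s ↦ and_congr_right fun _ ↦ forall_congr' fun I ↦
    ⟨fun h N hIN ↦ ?_, fun h m hIm ↦ ?_⟩
  · rintro _ ⟨m, hm, rfl⟩
    exact h m fun a ha ↦ hIN (Submodule.smul_mem_smul ha hm)
  · exact pointwise_smul_span_singleton_le_iff.1 (h _ (smul_span_singleton_le_iff.2 hIm))

end LatticeCharacterizations

section IdealEquivariantOrderIso

variable {N : Type*} [AddCommGroup N] [Module R N] (f : Submodule R M ≃o Submodule R N)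
  (hf : ∀ (I : Ideal R) (L : Submodule R M), f (I • L) = I • f L)

include hf

theorem map_pointwise_smul_of_map_ideal_smul (r : R) (L : Submodule R M) :
    f (r • L) = r • f L := by
  simpa only [Submodule.ideal_span_singleton_smul] using hf (Ideal.span {r}) L

theorem colon_top_map_of_map_ideal_smul (P : Submodule R M) : (f P).colon ⊤ = P.colon ⊤ := by
  ext r
  rw [mem_colon_top_iff_smul_top_le, mem_colon_top_iff_smul_top_le, ← f.map_top,
    ← map_pointwise_smul_of_map_ideal_smul f hf, f.le_iff_le]

theorem map_ann0_of_map_ideal_smul (I : Ideal R) : f (ann0 R M I) = ann0 R N I := by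
  refine eq_of_forall_le_iff fun L ↦ ?_
  obtain ⟨L, rfl⟩ := f.surjective L
  rw [f.le_iff_le, le_ann0_iff_smul_eq_bot, le_ann0_iff_smul_eq_bot, ← hf, map_eq_bot_iff]

theorem sPrime_map_iff (S : Set R) (P : Submodule R M) : SPrime S (f P) ↔ SPrime S P := by
  simp only [sPrime_iff_forall_submodule, f.surjective.forall,
    colon_top_map_of_map_ideal_smul f hf, ← map_pointwise_smul_of_map_ideal_smul f hf,
    f.le_iff_le]

theorem sCopure_map_iff (S : Set R) (L : Submodule R M) : SCopure S (f L) ↔ SCopure S L := by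
  simp only [sCopure_iff_forall_submodule, f.surjective.forall, ← map_ann0_of_map_ideal_smul f hf,
    ← hf, ← map_pointwise_smul_of_map_ideal_smul f hf, ← f.map_sup, f.le_iff_le]

theorem sQuasiCopure_map_iff (S : Set R) (L : Submodule R M) :
    SQuasiCopure S (f L) ↔ SQuasiCopure S L := by
  simp only [SQuasiCopure, f.surjective.forall, sPrime_map_iff f hf, sCopure_map_iff f hf,
    f.le_iff_le]

end IdealEquivariantOrderIso

section Cancellation

theorem eq_top_of_smul_top_eq_top [Module.Finite R M] [FaithfulSMul R M] {J : Ideal R}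
    (hJ : J • (⊤ : Submodule R M) = ⊤) : J = ⊤ := by
  obtain ⟨r, hr, hr_smul⟩ := Submodule.exists_mem_and_smul_eq_self_of_fg_of_le_smul J
    (⊤ : Submodule R M) Module.Finite.fg_top hJ.ge
  have hr_one : r = 1 := FaithfulSMul.eq_of_smul_eq_smul (α := M) fun m ↦ by
    rw [hr_smul m trivial, one_smul]
  exact (Ideal.eq_top_iff_one J).2 (hr_one ▸ hr)

theorem sq_mul_mem_of_mem_colon_span_singleton [FaithfulSMul R M] {J : Ideal R} {a r : R} {m : M}
    (ha : a ∈ (Submodule.span R {m}).colon ⊤) (hr : r • m ∈ J • (⊤ : Submodule R M)) :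
    a ^ 2 * r ∈ J := by
  have ha_le : a • (⊤ : Submodule R M) ≤ Submodule.span R {m} := mem_colon_top_iff_smul_top_le.1 ha
  have harm : a • r • m ∈ J • Submodule.span R {m} := by
    have hle : a • J • (⊤ : Submodule R M) ≤ J • Submodule.span R {m} :=
      (Submodule.map_smul'' J ⊤ _).trans_le (Submodule.smul_mono le_rfl ha_le)
    exact hle (Submodule.smul_mem_pointwise_smul _ a _ hr)
  obtain ⟨k, hk, hkm⟩ := Submodule.mem_smul_span_singleton.1 harm
  have hak : a ^ 2 * r = k * a := FaithfulSMul.eq_of_smul_eq_smul (α := M) fun x ↦ by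
    obtain ⟨c, hc⟩ := Submodule.mem_span_singleton.1 (Submodule.mem_colon.1 ha x trivial)
    calc (a ^ 2 * r) • x = (a * r) • a • x := by rw [smul_smul]; ring_nf
      _ = c • a • r • m := by rw [← hc, smul_comm, mul_smul]
      _ = k • a • x := by rw [← hkm, smul_comm, hc]
      _ = (k * a) • x := (mul_smul k a x).symm
  exact hak ▸ J.mul_mem_right a hk

end Cancellation

/-- `M` is a multiplication module: each of its submodules has the form `J M` for some ideal
`J`. -/
def IsMultiplicationModule (R M : Type*) [CommRing R] [AddCommGroup M] [Module R M] : Prop :=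
  ∀ A : Submodule R M, ∃ J : Ideal R, A = J • (⊤ : Submodule R M)

namespace IsMultiplicationModule

theorem colon_top_smul_top (hM : IsMultiplicationModule R M) (A : Submodule R M) :
    A.colon ⊤ • (⊤ : Submodule R M) = A := by
  refine le_antisymm (Submodule.smul_le.2 fun r hr m hm ↦ Submodule.mem_colon.1 hr m hm) ?_
  obtain ⟨J, rfl⟩ := hM A
  exact Submodule.smul_mono_left fun j hj ↦
    Submodule.mem_colon.2 fun _ _ ↦ Submodule.smul_mem_smul hj trivial

variable [Module.Finite R M] [FaithfulSMul R M]

theorem iSup_colon_span_singleton_eq_top (hM : IsMultiplicationModule R M) :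
    ⨆ m : M, (Submodule.span R {m}).colon (⊤ : Set M) = ⊤ := by
  refine eq_top_of_smul_top_eq_top (M := M) (eq_top_iff.2 fun m _ ↦ ?_)
  have hm : m ∈ (Submodule.span R {m}).colon ⊤ • (⊤ : Submodule R M) := by
    rw [hM.colon_top_smul_top]
    exact Submodule.mem_span_singleton_self m
  exact Submodule.smul_mono_left (le_iSup (fun m : M ↦ (Submodule.span R {m}).colon ⊤) m) hm

theorem smul_top_le_smul_top_iff (hM : IsMultiplicationModule R M) {K J : Ideal R} :
    K • (⊤ : Submodule R M) ≤ J • ⊤ ↔ K ≤ J := by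
  refine ⟨fun hKJ r hr ↦ ?_, Submodule.smul_mono_left⟩
  have hle : ⨆ m : M, (Submodule.span R {m}).colon (⊤ : Set M) ≤ (J.colon {r}).radical :=
    iSup_le fun m a ha ↦ ⟨2, Submodule.mem_colon_singleton.2 <|
      sq_mul_mem_of_mem_colon_span_singleton ha (hKJ (Submodule.smul_mem_smul hr trivial))⟩
  rw [hM.iSup_colon_span_singleton_eq_top, top_le_iff, Ideal.radical_eq_top] at hle
  simpa using hle

/-- The isomorphism `K ↦ K M` from the lattice of ideals of `R` to the lattice of submodules of a
finitely generated faithful multiplication module `M`. -/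
noncomputable def idealOrderIso (hM : IsMultiplicationModule R M) : Ideal R ≃o Submodule R M :=
  RelIso.ofSurjective
    (OrderEmbedding.ofMapLEIff (fun K : Ideal R ↦ K • (⊤ : Submodule R M))
      fun _ _ ↦ hM.smul_top_le_smul_top_iff)
    fun A ↦ (hM A).imp fun _ ↦ Eq.symm

theorem idealOrderIso_smul (hM : IsMultiplicationModule R M) (J K : Ideal R) :
    hM.idealOrderIso (J • K) = J • hM.idealOrderIso K :=
  Submodule.smul_assoc J K ⊤

end IsMultiplicationModule

theorem stmt_18_general (S : Set R) [Module.Finite R M] [FaithfulSMul R M]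
    (hM : IsMultiplicationModule R M) (I : Ideal R) :
    SQuasiCopure S (I • (⊤ : Submodule R M)) ↔ SQuasiCopure S I :=
  sQuasiCopure_map_iff hM.idealOrderIso hM.idealOrderIso_smul S I

theorem stmt_18 (S : Set R) (hS0 : (0:R) ∉ S) (hS1 : (1:R) ∈ S) (hSm : ∀ s ∈ S, ∀ t ∈ S, s * t ∈ S)
    [Module.Finite R M]
    (hfaith : (⊤ : Submodule R M).annihilator = ⊥)
    (hmult : ∀ A : Submodule R M, ∃ J : Ideal R, A = J • (⊤ : Submodule R M))
    (I : Ideal R) :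
    SQuasiCopure S (I • (⊤ : Submodule R M)) ↔ SQuasiCopure S I := by
  have : FaithfulSMul R M :=
    Module.annihilator_eq_bot.1 (Submodule.annihilator_top.symm.trans hfaith)
  exact stmt_18_general S hmult I
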